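/- arXiv:2602.04368 — 4 statements merged into one kernel-verified Lean document; each statement's English description precedes it below -/
import Mathlib

section
/- (Biconjugation for the Stokes density and the divergence constraint.) Let d ≥ 1, ν > 0, and G ∈ ℝ^{d×d}. The function S ↦ ⟨S, G⟩ − (1/(2ν))·|dev(S)|² on ℝ^{d×d} is bounded above if and only if tr(G) = 0; and if tr(G) = 0, then its supremum equals (ν/2)·|G|². -/
/-!
On the line `ℝ I` the deviatoric part vanishes and the function is `t ↦ t tr G`, so boundedness
forces `tr G = 0`. Conversely, if `tr G = 0` then `⟨S, G⟩ = ⟨dev S, G⟩`, and completing the square,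
`⟨D, G⟩ - |D|² / (2ν) = (ν/2) |G|² - |D - ν G|² / (2ν)` with `D = dev S`, gives the upper bound
`(ν/2) |G|²`. It is attained at `S = ν G`, which is its own deviatoric part.
-/

open Matrix

noncomputable section

/-- Frobenius inner product of real `d × d` matrices. -/
def frob {d : ℕ} (A B : Matrix (Fin d) (Fin d) ℝ) : ℝ := ∑ i, ∑ j, A i j * B i j

/-- Deviatoric part `dev A = A - (tr A / d) • I`. -/
def dev {d : ℕ} (A : Matrix (Fin d) (Fin d) ℝ) : Matrix (Fin d) (Fin d) ℝ :=
  A - (Matrix.trace A / (d : ℝ)) • (1 : Matrix (Fin d) (Fin d) ℝ)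

/-- Elasticity tensor `ℂ A = 2μ A + λ (tr A) I`. -/
def elC {d : ℕ} (μ lam : ℝ) (A : Matrix (Fin d) (Fin d) ℝ) : Matrix (Fin d) (Fin d) ℝ :=
  (2 * μ) • A + (lam * Matrix.trace A) • (1 : Matrix (Fin d) (Fin d) ℝ)

/-- Inverse elasticity tensor `ℂ⁻¹ B = (1/(2μ)) dev B + (tr B/(2dμ + d²λ)) I`. -/
def elCinv {d : ℕ} (μ lam : ℝ) (B : Matrix (Fin d) (Fin d) ℝ) : Matrix (Fin d) (Fin d) ℝ :=
  (1 / (2 * μ)) • dev B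
    + (Matrix.trace B / (2 * (d : ℝ) * μ + (d : ℝ) ^ 2 * lam)) • (1 : Matrix (Fin d) (Fin d) ℝ)

lemma frob_smul_one_left {d : ℕ} (t : ℝ) (G : Matrix (Fin d) (Fin d) ℝ) :
    frob (t • (1 : Matrix (Fin d) (Fin d) ℝ)) G = t * Matrix.trace G := by
  simp [frob, Matrix.trace, Matrix.one_apply, Finset.mul_sum]

lemma frob_sub_left {d : ℕ} (A B G : Matrix (Fin d) (Fin d) ℝ) :
    frob (A - B) G = frob A G - frob B G := by
  simp [frob, sub_mul, Finset.sum_sub_distrib]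

lemma frob_dev_left {d : ℕ} (S G : Matrix (Fin d) (Fin d) ℝ) (hG : Matrix.trace G = 0) :
    frob (dev S) G = frob S G := by
  rw [dev, frob_sub_left, frob_smul_one_left, hG, mul_zero, sub_zero]

lemma dev_smul_one {d : ℕ} (hd : 1 ≤ d) (t : ℝ) :
    dev (t • (1 : Matrix (Fin d) (Fin d) ℝ)) = 0 := by
  have hd' : (d : ℝ) ≠ 0 := by exact_mod_cast (by omega : d ≠ 0)
  simp [dev, Matrix.trace_smul, hd']

lemma frob_smul_left {d : ℕ} (t : ℝ) (A G : Matrix (Fin d) (Fin d) ℝ) :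
    frob (t • A) G = t * frob A G := by
  simp [frob, Finset.mul_sum, mul_assoc]

lemma frob_comm {d : ℕ} (A B : Matrix (Fin d) (Fin d) ℝ) : frob A B = frob B A := by
  simp [frob, mul_comm]

lemma frob_self_nonneg {d : ℕ} (A : Matrix (Fin d) (Fin d) ℝ) : 0 ≤ frob A A :=
  Finset.sum_nonneg fun _ _ => Finset.sum_nonneg fun _ _ => mul_self_nonneg _

/-- The Fenchel–Young inequality for `|·|² / (2ν)`. -/
lemma frob_young {d : ℕ} (ν : ℝ) (hν : 0 < ν) (D G : Matrix (Fin d) (Fin d) ℝ) :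
    frob D G - 1 / (2 * ν) * frob D D ≤ ν / 2 * frob G G := by
  have h := frob_self_nonneg (D - ν • G)
  have e : frob (D - ν • G) (D - ν • G)
      = frob D D - 2 * ν * frob D G + ν ^ 2 * frob G G := by
    rw [frob_sub_left, frob_smul_left, frob_comm D, frob_comm G, frob_sub_left, frob_sub_left,
      frob_smul_left, frob_smul_left, frob_comm G D]
    ring
  rw [e] at h
  have h2 : 0 ≤ 1 / (2 * ν) * (frob D D - 2 * ν * frob D G + ν ^ 2 * frob G G) := by positivity
  have e2 : 1 / (2 * ν) * (frob D D - 2 * ν * frob D G + ν ^ 2 * frob G G)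
      = 1 / (2 * ν) * frob D D - frob D G + ν / 2 * frob G G := by
    field_simp
  linarith

/-- biconjugation for the Stokes density and the divergence constraint.
`S ↦ ⟨S, G⟩ - (1/(2ν))|dev S|²` is bounded above iff `tr G = 0`, and in that case its
supremum is `(ν/2)|G|²`. -/
theorem stokes_density_biconjugate {d : ℕ} (hd : 1 ≤ d) (ν : ℝ) (hν : 0 < ν)
    (G : Matrix (Fin d) (Fin d) ℝ) :
    (BddAbove (Set.range fun S : Matrix (Fin d) (Fin d) ℝ =>
        frob S G - 1 / (2 * ν) * frob (dev S) (dev S)) ↔ Matrix.trace G = 0) ∧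
    (Matrix.trace G = 0 →
      IsLUB (Set.range fun S : Matrix (Fin d) (Fin d) ℝ =>
          frob S G - 1 / (2 * ν) * frob (dev S) (dev S))
        ((ν / 2) * frob G G)) := by
  have lub : Matrix.trace G = 0 →
      IsLUB (Set.range fun S : Matrix (Fin d) (Fin d) ℝ =>
          frob S G - 1 / (2 * ν) * frob (dev S) (dev S))
        ((ν / 2) * frob G G) := by
    intro hG
    refine IsGreatest.isLUB ⟨⟨ν • G, ?_⟩, ?_⟩
    · have hdev : dev (ν • G) = ν • G := by simp [dev, Matrix.trace_smul, hG]
      simp only [hdev]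
      rw [frob_smul_left, frob_smul_left, frob_comm G (ν • G), frob_smul_left]
      field_simp
      ring
    · rintro _ ⟨S, rfl⟩
      simp only
      rw [← frob_dev_left S G hG]
      exact frob_young ν hν (dev S) G
  refine ⟨⟨?_, fun hG => (lub hG).bddAbove⟩, lub⟩
  rintro ⟨M, hM⟩
  by_contra hG
  -- `S = ((M + 1) / tr G) I` gives the value `M + 1`.
  have h := hM ⟨((M + 1) / Matrix.trace G) • (1 : Matrix (Fin d) (Fin d) ℝ), rfl⟩
  simp only [dev_smul_one hd, frob_smul_one_left, div_mul_cancel₀ _ hG] at h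
  simp [frob] at h
  linarith
end
end

section
/- (Abstract strong duality and optimality of the dual solution.) Suppose u ∈ K satisfies I(u) ≤ I(v) for all v ∈ K, and set q := B u + g. Then: (i) q is admissible, i.e., ⟨q, B w⟩ = ℓ(w) for all w ∈ K; (ii) the strong duality relation I(u) = D(q) holds; and (iii) for every admissible r ∈ Y one has D(q) − D(r) = (1/2)‖q − r‖², so in particular q maximizes D over the admissible elements. -/
/-!
Perturbing the minimiser `u` along `w ∈ K` gives the Euler–Lagrange equation
`⟪q, B w⟫ = ℓ w`, which is admissibility of `q`. Testing an admissible `r` with `u` gives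
`⟪r, q⟫ = ℓ u + ⟪r, g⟫`; for `r = q` this is strong duality, and subtracting the identities
for `q` and `r` turns `D(q) - D(r)` into half the square of `‖q - r‖`.
-/

open scoped RealInnerProductSpace

/-- abstract strong duality and optimality of the dual solution. If `u ∈ K`
minimizes `I(v) = (1/2)‖Bv + g‖² - ℓ(v)` over `K` and `q := Bu + g`, then (i) `q` is
admissible, (ii) `I(u) = D(q)`, and (iii) `D(q) - D(r) = (1/2)‖q - r‖²` for every
admissible `r`, so `q` maximizes `D` over the admissible elements. -/
theorem abstract_strong_duality
    {X Y : Type*} [NormedAddCommGroup X] [InnerProductSpace ℝ X]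
    [NormedAddCommGroup Y] [InnerProductSpace ℝ Y]
    (B : X →L[ℝ] Y) (g : Y) (ℓ : X →L[ℝ] ℝ) (K : Submodule ℝ X)
    (u : X) (hu : u ∈ K)
    (hmin : ∀ v ∈ K, (1 / 2) * ‖B u + g‖ ^ 2 - ℓ u ≤ (1 / 2) * ‖B v + g‖ ^ 2 - ℓ v)
    (q : Y) (hq : q = B u + g) :
    (∀ w ∈ K, ⟪q, B w⟫ = ℓ w) ∧
    ((1 / 2) * ‖B u + g‖ ^ 2 - ℓ u = -(1 / 2) * ‖q‖ ^ 2 + ⟪q, g⟫) ∧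
    (∀ r : Y, (∀ w ∈ K, ⟪r, B w⟫ = ℓ w) →
      (-(1 / 2) * ‖q‖ ^ 2 + ⟪q, g⟫) - (-(1 / 2) * ‖r‖ ^ 2 + ⟪r, g⟫) =
        (1 / 2) * ‖q - r‖ ^ 2) := by
  have hadm : ∀ w ∈ K, ⟪q, B w⟫ = ℓ w := by
    intro w hw
    -- Minimality along the line `t ↦ u + t w` makes this quadratic in `t`, which has no
    -- constant term, nonnegative; so its discriminant `(⟪q, B w⟫ - ℓ w)²` is at most zero.
    have hquad : ∀ t : ℝ,
        0 ≤ (1 / 2 * ‖B w‖ ^ 2) * (t * t) + (⟪q, B w⟫ - ℓ w) * t + 0 := by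
      intro t
      have h := hmin (u + t • w) (K.add_mem hu (K.smul_mem t hw))
      have hB : B (u + t • w) + g = q + t • B w := by
        rw [hq, map_add, map_smul]
        abel
      rw [hB, ← hq, norm_add_sq_real, inner_smul_right, norm_smul, mul_pow,
        Real.norm_eq_abs, sq_abs, map_add, map_smul, smul_eq_mul] at h
      linarith
    have hdisc := discrim_le_zero hquad
    rw [discrim] at hdisc
    have hsq : (⟪q, B w⟫ - ℓ w) ^ 2 = 0 := le_antisymm (by linarith) (sq_nonneg _)
    exact sub_eq_zero.mp (pow_eq_zero_iff two_ne_zero |>.mp hsq)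
  -- Testing any admissible `r` with `w = u` and substituting `B u = q - g`.
  have htest : ∀ r : Y, (∀ w ∈ K, ⟪r, B w⟫ = ℓ w) → ⟪r, q⟫ = ℓ u + ⟪r, g⟫ := by
    intro r hr
    rw [hq, inner_add_right, hr u hu]
  have hqq := htest q hadm
  rw [real_inner_self_eq_norm_sq] at hqq
  refine ⟨hadm, ?_, ?_⟩
  · rw [← hq]
    linarith
  · intro r hr
    have hrq := htest r hr
    rw [norm_sub_sq_real, real_inner_comm r q]
    linarith
end

section
/- (Abstract generalized Prager–Synge identity.) Suppose u ∈ K satisfies I(u) ≤ I(v) for all v ∈ K, set q := B u + g, and let r ∈ Y be admissible. Then for every v ∈ K one has the identity (1/2)‖B(u − v)‖² + (1/2)‖q − r‖² = (1/2)‖r − (B v + g)‖². -/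
open scoped RealInnerProductSpace

/-!
Varying the minimiser `u` along `u + t • w`, `w ∈ K`, gives a quadratic polynomial in `t` that is
nonnegative on `ℝ` and vanishes at `0`, so its linear coefficient is zero: this is the
Euler–Lagrange equation `⟪B u + g, B w⟫ = ℓ w` (`euler_lagrange`). Hence `q - r` is orthogonal to
`B w` for every `w ∈ K`, and the identity is Pythagoras applied to
`r - (B v + g) = B (u - v) - (q - r)`.
-/

theorem euler_lagrange
    {X Y : Type*} [NormedAddCommGroup X] [InnerProductSpace ℝ X]
    [NormedAddCommGroup Y] [InnerProductSpace ℝ Y]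
    (B : X →L[ℝ] Y) (g : Y) (ℓ : X →L[ℝ] ℝ) (K : Submodule ℝ X)
    (u : X) (hu : u ∈ K)
    (hmin : ∀ v ∈ K, (1 / 2) * ‖B u + g‖ ^ 2 - ℓ u ≤ (1 / 2) * ‖B v + g‖ ^ 2 - ℓ v)
    (w : X) (hw : w ∈ K) : ⟪B u + g, B w⟫ = ℓ w := by
  have hquad : ∀ t : ℝ, 0 ≤ (1 / 2 * ‖B w‖ ^ 2) * (t * t) + (⟪B u + g, B w⟫ - ℓ w) * t + 0 := by
    intro t
    have h := hmin (u + t • w) (K.add_mem hu (K.smul_mem t hw))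
    have hsplit : B (u + t • w) + g = (B u + g) + t • B w := by
      rw [map_add, map_smul]
      abel
    rw [hsplit, norm_add_sq_real (B u + g) (t • B w), inner_smul_right, norm_smul, mul_pow, Real.norm_eq_abs,
      sq_abs, map_add, map_smul, smul_eq_mul] at h
    linarith
  -- The constant term is `0`, so the discriminant is the square of the linear coefficient.
  have hdisc := discrim_le_zero hquad
  rw [discrim] at hdisc
  have hzero : ⟪B u + g, B w⟫ - ℓ w = 0 := by
    apply pow_eq_zero_iff two_ne_zero |>.mp
    linarith [sq_nonneg (⟪B u + g, B w⟫ - ℓ w)]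
  linarith

/-- abstract generalized Prager–Synge identity. If `u ∈ K` minimizes
`I(v) = (1/2)‖Bv + g‖² - ℓ(v)` over `K`, `q := Bu + g`, and `r` is admissible, then for
every `v ∈ K`, `(1/2)‖B(u - v)‖² + (1/2)‖q - r‖² = (1/2)‖r - (Bv + g)‖²`. -/
theorem abstract_prager_synge
    {X Y : Type*} [NormedAddCommGroup X] [InnerProductSpace ℝ X]
    [NormedAddCommGroup Y] [InnerProductSpace ℝ Y]
    (B : X →L[ℝ] Y) (g : Y) (ℓ : X →L[ℝ] ℝ) (K : Submodule ℝ X)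
    (u : X) (hu : u ∈ K)
    (hmin : ∀ v ∈ K, (1 / 2) * ‖B u + g‖ ^ 2 - ℓ u ≤ (1 / 2) * ‖B v + g‖ ^ 2 - ℓ v)
    (q : Y) (hq : q = B u + g)
    (r : Y) (hr : ∀ w ∈ K, ⟪r, B w⟫ = ℓ w) :
    ∀ v ∈ K, (1 / 2) * ‖B (u - v)‖ ^ 2 + (1 / 2) * ‖q - r‖ ^ 2 =
      (1 / 2) * ‖r - (B v + g)‖ ^ 2 := by
  intro v hv
  have hw : u - v ∈ K := K.sub_mem hu hv
  have horth : ⟪B (u - v), q - r⟫ = 0 := by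
    rw [real_inner_comm, inner_sub_left, hr _ hw, hq, euler_lagrange B g ℓ K u hu hmin _ hw,
      sub_self]
  have hsplit : r - (B v + g) = B (u - v) - (q - r) := by
    rw [hq, map_sub]
    abel
  rw [hsplit, norm_sub_sq_real (B (u - v)) (q - r), horth]
  ring
end

section
/- (Abstract quasi-optimality with explicit constant 6.) Let Y be a real inner product space, let z, u_h, q_h ∈ Y, and let A, R ⊆ Y be sets such that for all v ∈ A and r ∈ R the discrete Prager–Synge identity ‖u_h − v‖² + ‖q_h − r‖² = ‖v − r‖² holds. Then for all v ∈ A and r ∈ R one has ‖u_h − z‖² + ‖q_h − z‖² ≤ 6·(‖v − z‖² + ‖r − z‖²); in particular the combined discretisation error is bounded by 6 times the sum of the best-approximation errors inf_{v ∈ A} ‖v − z‖² + inf_{r ∈ R} ‖r − z‖². -/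
open scoped RealInnerProductSpace

/-- The triangle inequality through `b`, squared with Young's inequality. -/
lemma norm_sub_sq_le_two_mul {Y : Type*} [NormedAddCommGroup Y] (a b c : Y) :
    ‖a - c‖ ^ 2 ≤ 2 * (‖a - b‖ ^ 2 + ‖b - c‖ ^ 2) := by
  have h := norm_sub_le_norm_sub_add_norm_sub a b c
  nlinarith [norm_nonneg (a - c), sq_nonneg (‖a - b‖ - ‖b - c‖)]

/-- abstract quasi-optimality with explicit constant 6. If for all `v ∈ A`
and `r ∈ R` the discrete Prager–Synge identity `‖u_h - v‖² + ‖q_h - r‖² = ‖v - r‖²` holds,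
then for all `v ∈ A` and `r ∈ R`,
`‖u_h - z‖² + ‖q_h - z‖² ≤ 6 (‖v - z‖² + ‖r - z‖²)`; in particular the combined
discretisation error is bounded by 6 times the sum of the best-approximation errors. -/
theorem abstract_quasi_optimality
    {Y : Type*} [NormedAddCommGroup Y] [InnerProductSpace ℝ Y]
    (z u_h q_h : Y) (A R : Set Y)
    (hPS : ∀ v ∈ A, ∀ r ∈ R, ‖u_h - v‖ ^ 2 + ‖q_h - r‖ ^ 2 = ‖v - r‖ ^ 2) :
    ∀ v ∈ A, ∀ r ∈ R,
      ‖u_h - z‖ ^ 2 + ‖q_h - z‖ ^ 2 ≤ 6 * (‖v - z‖ ^ 2 + ‖r - z‖ ^ 2) := by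
  intro v hv r hr
  -- Splitting at `v` and `r` costs a factor 2; the identity turns the discrete part into
  -- `2 ‖v - r‖²`, and splitting that at `z` gives the constant `2 * 2 + 2 = 6`.
  have hu := norm_sub_sq_le_two_mul u_h v z
  have hq := norm_sub_sq_le_two_mul q_h r z
  have hvr := norm_sub_sq_le_two_mul v z r
  rw [norm_sub_rev z r] at hvr
  linarith [hPS v hv r hr]
end
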